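/- Let I be a unique games instance with |V| = n vertices and optimal value z*, and let H = EuclideanSpace ℝ (Fin ((k+1)·n)). Then the supremum, over all feasible vector assignments v, of the relaxation objective z₁(v) is at least z*; that is, z₁* ≥ z*. -/

import Mathlib

open RealInnerProductSpace

/-- the supremum z₁* of the SDP relaxation objective over
feasible vector assignments is at least the optimal value z*. -/
theorem stmt_13 {V : Type*} [Fintype V] [DecidableEq V] {k : ℕ} (hk : 2 ≤ k)
    (E : Finset (V × V)) (w : V × V → ℝ) (hw : ∀ e ∈ E, 0 < w e)
    (σ : V × V → Equiv.Perm (Fin k))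
    (z : (V → Fin k) → ℝ)
    (hz : ∀ ℓ, z ℓ = ∑ e ∈ E, if ℓ e.2 = σ e (ℓ e.1) then w e else 0)
    (zstar : ℝ) (hzstar : IsGreatest (Set.range z) zstar)
    (n : ℕ) (hn : n = Fintype.card V)
    (z₁ : (V → Fin (k + 1) → EuclideanSpace ℝ (Fin ((k + 1) * n))) → ℝ)
    (hz₁ : ∀ v, z₁ v = (1 / 4) * ∑ e ∈ E, ∑ r : Fin k, w e *
        (⟪v e.1 0, v e.1 0⟫ + ⟪v e.1 0, v e.1 r.succ⟫ +
          ⟪v e.2 0, v e.2 (σ e r).succ⟫ + ⟪v e.1 r.succ, v e.2 (σ e r).succ⟫))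
    (z₁star : ℝ)
    (hz₁star : IsLUB {x : ℝ |
      ∃ v : V → Fin (k + 1) → EuclideanSpace ℝ (Fin ((k + 1) * n)),
        (∀ i r, ‖v i r‖ = 1) ∧
        (∀ i, ∑ r : Fin k, ⟪v i 0, v i r.succ⟫ ≤ 2 - k) ∧
        z₁ v = x} z₁star) :
    z₁star ≥ zstar := by
  obtain ⟨⟨ℓ, rfl⟩, -⟩ := hzstar
  obtain ⟨u, hu⟩ : ∃ u : EuclideanSpace ℝ (Fin ((k + 1) * n)), ∀ _ : V, ‖u‖ = 1 := by
    rcases isEmpty_or_nonempty V with h | h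
    · exact ⟨0, fun i => (h.false i).elim⟩
    · have hpos : 0 < (k + 1) * n := by
        have := Fintype.card_pos (α := V)
        rw [hn]; positivity
      exact ⟨EuclideanSpace.single ⟨0, hpos⟩ 1, fun _ => by simp⟩
  have hin : ∀ (_ : V) (a b : ℝ), ⟪a • u, b • u⟫ = a * b := by
    intro i a b
    rw [real_inner_smul_left, real_inner_smul_right, real_inner_self_eq_norm_sq, hu i]
    ring
  let s : V → Fin (k + 1) → ℝ := fun i =>
    Fin.cons 1 (fun r => if r = ℓ i then (1 : ℝ) else -1)
  have s0 : ∀ i, s i 0 = 1 := fun i => rfl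
  have ss : ∀ i (r : Fin k), s i r.succ = if r = ℓ i then (1 : ℝ) else -1 := fun i r => rfl
  apply hz₁star.1
  refine ⟨fun i r => s i r • u, ?_, ?_, ?_⟩
  · intro i r
    rw [norm_smul, hu i]
    refine Fin.cases ?_ (fun r => ?_) r
    · simp [s0]
    · rw [ss]; split_ifs <;> simp
  · intro i
    simp only [hin i, s0, ss, one_mul]
    have : ∀ r : Fin k, (if r = ℓ i then (1 : ℝ) else -1) = (if r = ℓ i then 2 else 0) - 1 := by
      intro r; split_ifs <;> norm_num
    simp [this]
  · rw [hz₁, hz, Finset.mul_sum]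
    refine Finset.sum_congr rfl fun e _ => ?_
    simp only [hin e.1, s0, ss]
    rw [Finset.sum_eq_single (ℓ e.1)]
    · by_cases h : ℓ e.2 = σ e (ℓ e.1)
      · simp [h]; ring
      · simp [h, Ne.symm h]
    · intro r _ hr
      rw [if_neg hr]
      split_ifs <;> ring
    · simp
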